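/- arXiv:2012.11748 — 3 statements merged into one kernel-verified Lean document; each statement's English description precedes it below -/
import Mathlib

section
/- Let p, q, μ be unit vectors in ℝ³ (EuclideanSpace ℝ (Fin 3)) with q ≠ p, q ≠ -p, ⟪μ, p⟫ = 0, and q lying in the plane spanned by p and μ (i.e., q = ⟪p, q⟫ • p + ⟪μ, q⟫ • μ). Then ⟪Log p q, μ⟫ = sign(⟪μ, q⟫) · arccos ⟪p, q⟫, where sign denotes the real sign function. (This is equation (5) of the paper, expressing the projection of the logarithmic map onto the co-normal as a signed geodesic distance between neighboring normal vectors.) -/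
/-! In the plane of `p` and `μ`, the component of `q` orthogonal to `p` is `⟪μ, q⟫ • μ`, of norm
`|⟪μ, q⟫|`. Pairing the logarithm with the unit vector `μ` therefore gives
`arccos ⟪p, q⟫ / |⟪μ, q⟫| * ⟪μ, q⟫`, and the quotient `⟪μ, q⟫ / |⟪μ, q⟫|` is the sign. -/

open scoped RealInnerProductSpace

noncomputable def sphereLog (p q : EuclideanSpace ℝ (Fin 3)) : EuclideanSpace ℝ (Fin 3) :=
  (Real.arccos ⟪p, q⟫ / ‖q - ⟪p, q⟫ • p‖) • (q - ⟪p, q⟫ • p)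

theorem inner_sphereLog_conormal_eq_signed_angle (p q μ : EuclideanSpace ℝ (Fin 3))
    (hp : ‖p‖ = 1) (hq : ‖q‖ = 1) (hμ : ‖μ‖ = 1)
    (hqp : q ≠ p) (hqp' : q ≠ -p)
    (hμp : ⟪μ, p⟫ = 0)
    (hplane : q = ⟪p, q⟫ • p + ⟪μ, q⟫ • μ) :
    ⟪sphereLog p q, μ⟫ = Real.sign ⟪μ, q⟫ * Real.arccos ⟪p, q⟫ := by
  have htangent : q - ⟪p, q⟫ • p = ⟪μ, q⟫ • μ := sub_eq_of_eq_add' hplane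
  rw [sphereLog, htangent, norm_smul, hμ, mul_one, Real.norm_eq_abs, real_inner_smul_left,
    real_inner_smul_left, real_inner_self_eq_norm_sq, hμ]
  generalize ⟪μ, q⟫ = t
  rcases lt_trichotomy t 0 with ht | rfl | ht
  · rw [Real.sign_of_neg ht, abs_of_neg ht]
    field_simp [ht.ne]
  -- For `t = 0` (that is, `q = ±p`) both sides vanish, by `x / 0 = 0` and `sign 0 = 0`.
  · simp
  · rw [Real.sign_of_pos ht, abs_of_pos ht]
    field_simp
end

section
/- Let p, q, μ be unit vectors in ℝ³ (EuclideanSpace ℝ (Fin 3)) with -1 < ⟪p, q⟫ < 1, ⟪μ, p⟫ = 0, and q lying in the plane spanned by p and μ (i.e., q = ⟪p, q⟫ • p + ⟪μ, q⟫ • μ). Then sign(⟪μ, q⟫) • gradient (fun x => arccos(⟪x, q⟫ / ‖x‖)) p = -μ. (This is the first identity of equation (9) of the paper: the derivative of the signed angle sign(μ⁺·n⁻) arccos(n⁺·n⁻) with respect to the normal n⁺ equals minus the co-normal μ⁺.) -/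
/-!
For a unit vector `p` with `c = ⟪p, q⟫ ∈ (-1, 1)`, the map `x ↦ ⟪x, q⟫ / ‖x‖` has gradient
`q - c • p` at `p`, so by the chain rule the angle `x ↦ arccos (⟪x, q⟫ / ‖x‖)` has gradient
`-(√(1 - c²))⁻¹ • (q - c • p)` (`hasGradientAt_arccos_inner_div_norm`).
With `s = ⟪μ, q⟫`, coplanarity gives `q - c • p = s • μ` and `c² + s² = 1`, so this gradient is
`-(s / |s|) • μ`, and multiplying by `sign s` leaves `-μ`.
-/

open scoped RealInnerProductSpace

/-- At a unit vector `p`, the gradient of `x ↦ ‖x‖` is `p`, in Fréchet-derivative form. -/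
lemma hasFDerivAt_norm_of_norm_eq_one {p : EuclideanSpace ℝ (Fin 3)} (hp : ‖p‖ = 1) :
    HasFDerivAt (fun x : EuclideanSpace ℝ (Fin 3) => ‖x‖) (innerSL ℝ p) p := by
  -- The norm is differentiated as `√(‖x‖ ^ 2)`.
  have h := ((hasFDerivAt_id (𝕜 := ℝ) p).norm_sq).sqrt (by simp [hp])
  simp only [id, Real.sqrt_sq (norm_nonneg _)] at h
  refine h.congr_fderiv ?_
  ext v
  simp [hp]

lemma hasGradientAt_arccos_inner_div_norm {p q : EuclideanSpace ℝ (Fin 3)} (hp : ‖p‖ = 1)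
    (h₁ : -1 < ⟪p, q⟫) (h₂ : ⟪p, q⟫ < 1) :
    HasGradientAt (fun x : EuclideanSpace ℝ (Fin 3) => Real.arccos (⟪x, q⟫ / ‖x‖))
      (-(√(1 - ⟪p, q⟫ ^ 2))⁻¹ • (q - ⟪p, q⟫ • p)) p := by
  have hinner : HasFDerivAt (fun x : EuclideanSpace ℝ (Fin 3) => ⟪x, q⟫) (innerSL ℝ q) p := by
    simp only [← real_inner_comm _ q]
    exact (innerSL ℝ q).hasFDerivAt
  have hinv := (hasDerivAt_inv (x := ‖p‖) (by simp [hp])).comp_hasFDerivAt p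
    (hasFDerivAt_norm_of_norm_eq_one hp)
  have hquot := hinner.fun_mul hinv
  have hval : ⟪p, q⟫ * ‖p‖⁻¹ = ⟪p, q⟫ := by simp [hp]
  have harccos := Real.hasDerivAt_arccos h₁.ne' h₂.ne
  have h := harccos.comp_hasFDerivAt_of_eq p hquot hval.symm
  rw [hasGradientAt_iff_hasFDerivAt]
  refine h.congr_fderiv ?_
  ext v
  simp [hp]
  ring

theorem gradient_signed_angle_wrt_first_normal (p q μ : EuclideanSpace ℝ (Fin 3))
    (hp : ‖p‖ = 1) (hq : ‖q‖ = 1) (hμ : ‖μ‖ = 1)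
    (h₁ : -1 < ⟪p, q⟫) (h₂ : ⟪p, q⟫ < 1)
    (hμp : ⟪μ, p⟫ = 0)
    (hplane : q = ⟪p, q⟫ • p + ⟪μ, q⟫ • μ) :
    Real.sign ⟪μ, q⟫ •
        gradient (fun x : EuclideanSpace ℝ (Fin 3) => Real.arccos (⟪x, q⟫ / ‖x‖)) p = -μ := by
  rw [(hasGradientAt_arccos_inner_div_norm hp h₁ h₂).gradient]
  have hdiff : q - ⟪p, q⟫ • p = ⟪μ, q⟫ • μ := sub_eq_iff_eq_add'.mpr hplane
  -- Pairing the coplanarity relation with `q` gives `c² + s² = 1`.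
  have hsq : 1 - ⟪p, q⟫ ^ 2 = ⟪μ, q⟫ ^ 2 := by
    have h := congrArg (fun x => ⟪x, q⟫) hplane
    simp only [inner_add_left, real_inner_smul_left, real_inner_self_eq_norm_sq, hq] at h
    linarith
  have hs : ⟪μ, q⟫ ≠ 0 := by
    intro h0
    rw [h0] at hsq
    nlinarith
  rw [hdiff, hsq, Real.sqrt_sq_eq_abs, smul_smul, smul_smul, ← neg_one_smul ℝ μ]
  congr 1
  rcases lt_or_gt_of_ne hs with h | h
  · rw [Real.sign_of_neg h, abs_of_neg h]
    field_simp
  · rw [Real.sign_of_pos h, abs_of_pos h]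
    field_simp
end

section
/- Let p, q, μ, μ' be unit vectors in ℝ³ (EuclideanSpace ℝ (Fin 3)) with -1 < ⟪p, q⟫ < 1, ⟪μ, p⟫ = 0, ⟪μ', q⟫ = 0, q lying in the plane spanned by p and μ (i.e., q = ⟪p, q⟫ • p + ⟪μ, q⟫ • μ), p lying in the plane spanned by q and μ' (i.e., p = ⟪p, q⟫ • q + ⟪μ', p⟫ • μ'), and sign(⟪μ', p⟫) = sign(⟪μ, q⟫). Then sign(⟪μ, q⟫) • gradient (fun y => arccos(⟪p, y⟫ / ‖y‖)) q = -μ'. (This is the second identity of equation (9) of the paper: the derivative of the signed angle with respect to the normal n⁻ equals minus the co-normal μ⁻ of the other triangle.) -/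
/-!
At a unit vector `q`, the map `y ↦ ⟪p, y⟫ / ‖y‖` has gradient `p - ⟪p, q⟫ • q`, the component of `p`
orthogonal to `q`; the plane condition identifies it with `s • μ'`, where `s = ⟪μ', p⟫`. As `p` is a
unit vector, Pythagoras gives `1 - ⟪p, q⟫ ^ 2 = s ^ 2`, so the factor `-1 / √(1 - ⟪p, q⟫ ^ 2)` from
the derivative of `arccos` is `-1 / |s|`. The gradient of the angle is therefore `-(s / |s|) • μ'`,
and multiplying by `sign s = sign ⟪μ, q⟫` leaves `-μ'`.
-/

open scoped RealInnerProductSpace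

lemma hasGradientAt_inner_div_norm {E : Type*} [NormedAddCommGroup E] [InnerProductSpace ℝ E]
    [CompleteSpace E] (p q : E) (hq : ‖q‖ = 1) :
    HasGradientAt (fun y : E => ⟪p, y⟫ / ‖y‖) (p - ⟪p, q⟫ • q) q := by
  have hnorm : HasFDerivAt (fun y : E => ‖y‖) (innerSL ℝ q) q := by
    have h := (hasStrictFDerivAt_norm_sq q).hasFDerivAt.sqrt (by simp [hq])
    simp only [Real.sqrt_sq (norm_nonneg _)] at h
    convert h using 1
    ext v
    simp [hq]
  have hinner : HasFDerivAt (fun y : E => ⟪p, y⟫) (innerSL ℝ p) q := (innerSL ℝ p).hasFDerivAt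
  have hinv := (hasDerivAt_inv (x := ‖q‖) (by simp [hq])).comp_hasFDerivAt q hnorm
  rw [hasGradientAt_iff_hasFDerivAt]
  simp only [div_eq_mul_inv]
  refine (hinner.mul hinv).congr_fderiv ?_
  ext v
  simp [hq]
  ring

theorem gradient_signed_angle_wrt_second_normal (p q μ μ' : EuclideanSpace ℝ (Fin 3))
    (hp : ‖p‖ = 1) (hq : ‖q‖ = 1) (hμ : ‖μ‖ = 1) (hμ' : ‖μ'‖ = 1)
    (h₁ : -1 < ⟪p, q⟫) (h₂ : ⟪p, q⟫ < 1)
    (hμp : ⟪μ, p⟫ = 0) (hμ'q : ⟪μ', q⟫ = 0)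
    (hplaneq : q = ⟪p, q⟫ • p + ⟪μ, q⟫ • μ)
    (hplanep : p = ⟪p, q⟫ • q + ⟪μ', p⟫ • μ')
    (hsign : Real.sign ⟪μ', p⟫ = Real.sign ⟪μ, q⟫) :
    Real.sign ⟪μ, q⟫ •
        gradient (fun y : EuclideanSpace ℝ (Fin 3) => Real.arccos (⟪p, y⟫ / ‖y‖)) q = -μ' := by
  rw [← hsign]
  have hpyth : 1 - ⟪p, q⟫ ^ 2 = ⟪μ', p⟫ ^ 2 := by
    have h := congrArg (fun v => ⟪v, p⟫) hplanep
    simp only [inner_add_left, real_inner_smul_left, real_inner_self_eq_norm_sq, hp,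
      real_inner_comm p q] at h
    linarith
  have hproj : p - ⟪p, q⟫ • q = ⟪μ', p⟫ • μ' := sub_eq_of_eq_add' hplanep
  have hs : ⟪μ', p⟫ ≠ 0 := by
    intro h
    rw [h] at hpyth
    nlinarith
  have hgrad := hasGradientAt_inner_div_norm p q hq
  rw [hproj, hasGradientAt_iff_hasFDerivAt] at hgrad
  have harccos := (Real.hasDerivAt_arccos (x := ⟪p, q⟫ / ‖q‖) (by rw [hq, div_one]; exact h₁.ne')
    (by rw [hq, div_one]; exact h₂.ne)).comp_hasFDerivAt q hgrad
  rw [hq, div_one, hpyth, Real.sqrt_sq_eq_abs, ← map_smul, ← hasGradientAt_iff_hasFDerivAt]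
    at harccos
  have hfinal := harccos.gradient
  simp only [Function.comp_def] at hfinal
  rw [hfinal, smul_smul, smul_smul, ← neg_one_smul ℝ μ']
  congr 1
  rcases hs.lt_or_gt with h | h
  · rw [Real.sign_of_neg h, abs_of_neg h]
    field_simp
  · rw [Real.sign_of_pos h, abs_of_pos h]
    field_simp
end
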